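/- Suppose n is odd. Then for all integers i, j with 0 ≤ i ≤ n and 0 ≤ j ≤ (n−1)/2 (note i−j = n/2 is impossible since n is odd), the following identities hold in A: (1) O(2n−i, i)·O(n−j, j) = (−1)^{i(j−1)} O(3n−i−j, i+j) + (−1)^{ij} λ^j O(2n−i+j, n+i−j) if i−j < n/2, and = (−1)^{i(j−1)} O(3n−i−j, i+j) + (−1)^{ij} λ^i O(n+i−j, 2n+j−i) if i−j > n/2; (2) O(n−j, j)·O(2n−i, i) = (−1)^{ij} O(3n−i−j, i+j) + (−1)^{i(j−1)} λ^j O(2n−i+j, n+i−j) if i−j < n/2, and = (−1)^{ij} O(3n−i−j, i+j) + (−1)^{i(j−1)} λ^i O(n+i−j, 2n+j−i) if i−j > n/2. -/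

import Mathlib

/-!
Setting: `lam n = exp(2πi/n)` is a primitive `n`-th root of unity in `ℂ`.
`SkewAlg` is the `(-1)`-skew polynomial ring `A = ℂ⟨u,v⟩/(uv+vu)`, with
generators `uGen`, `vGen`.  The automorphism `g` (of order `2n`) is determined
by `g u = v`, `g v = lam n • u`, and generates the cyclic group `G`, so that
the fixed subring `A^G` is `{a | g a = a}`.  The orbit sum is
`orbitSum n a b = u^a v^b + (-1)^(a*b) * (lam n)^b • (u^b v^a)`.
-/

noncomputable section

/-- `lam n = exp(2πi/n)`, a primitive `n`-th root of unity. -/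
def lam (n : ℕ) : ℂ := Complex.exp (2 * (Real.pi : ℂ) * Complex.I / (n : ℂ))

/-- The defining relation of the `(-1)`-skew polynomial ring: `uv + vu = 0`. -/
inductive SkewRel : FreeAlgebra ℂ (Fin 2) → FreeAlgebra ℂ (Fin 2) → Prop
  | rel : SkewRel (FreeAlgebra.ι ℂ 0 * FreeAlgebra.ι ℂ 1 + FreeAlgebra.ι ℂ 1 * FreeAlgebra.ι ℂ 0) 0

/-- The skew polynomial ring `A = ℂ⟨u,v⟩/(uv+vu)`. -/
abbrev SkewAlg : Type := RingQuot SkewRel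

/-- The generator `u` of `A`. -/
def uGen : SkewAlg := RingQuot.mkAlgHom ℂ SkewRel (FreeAlgebra.ι ℂ 0)

/-- The generator `v` of `A`. -/
def vGen : SkewAlg := RingQuot.mkAlgHom ℂ SkewRel (FreeAlgebra.ι ℂ 1)

/-- Orbit sum `O(a,b) = u^a v^b + (-1)^(ab) λ^b u^b v^a`. -/
def orbitSum (n a b : ℕ) : SkewAlg :=
  uGen ^ a * vGen ^ b + ((-1 : ℂ) ^ (a * b) * lam n ^ b) • (uGen ^ b * vGen ^ a)

theorem vu_eq : vGen * uGen = (-1 : ℂ) • (uGen * vGen) := by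
  have h : uGen * vGen + vGen * uGen = 0 := by
    have := RingQuot.mkAlgHom_rel ℂ SkewRel.rel
    simpa [uGen, vGen] using this
  have h2 : uGen * vGen + (-1 : ℂ) • (uGen * vGen) = 0 := by
    calc uGen * vGen + (-1 : ℂ) • (uGen * vGen)
        = (1 : ℂ) • (uGen * vGen) + (-1 : ℂ) • (uGen * vGen) := by rw [one_smul]
      _ = ((1 : ℂ) + -1) • (uGen * vGen) := (add_smul _ _ _).symm
      _ = 0 := by rw [add_neg_cancel, zero_smul]
  exact add_left_cancel (h.trans h2.symm)

theorem v_u_pow (c : ℕ) : vGen * uGen ^ c = ((-1 : ℂ) ^ c) • (uGen ^ c * vGen) := by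
  induction c with
  | zero => simp
  | succ c ih =>
    rw [pow_succ, ← mul_assoc, ih, smul_mul_assoc, mul_assoc, vu_eq, mul_smul_comm, smul_smul,
      pow_succ, mul_assoc]

theorem v_pow_u_pow (b c : ℕ) :
    vGen ^ b * uGen ^ c = ((-1 : ℂ) ^ (b * c)) • (uGen ^ c * vGen ^ b) := by
  induction b with
  | zero => simp
  | succ b ih =>
    rw [pow_succ, mul_assoc, v_u_pow, mul_smul_comm, ← mul_assoc, ih, smul_mul_assoc, smul_smul,
      mul_assoc, ← pow_succ, ← pow_add]
    congr 2
    ring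

theorem mon_mul (a b c d : ℕ) :
    (uGen ^ a * vGen ^ b) * (uGen ^ c * vGen ^ d) =
      ((-1 : ℂ) ^ (b * c)) • (uGen ^ (a + c) * vGen ^ (b + d)) := by
  rw [mul_assoc, ← mul_assoc (vGen ^ b), v_pow_u_pow, smul_mul_assoc, mul_smul_comm, pow_add,
    pow_add]
  simp only [mul_assoc]

theorem orbit_mul (n a b c d : ℕ) :
    orbitSum n a b * orbitSum n c d =
      ((-1 : ℂ) ^ (b * c)) • (uGen ^ (a + c) * vGen ^ (b + d)) +
      ((-1 : ℂ) ^ (c * d + b * d) * lam n ^ d) • (uGen ^ (a + d) * vGen ^ (b + c)) +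
      ((-1 : ℂ) ^ (a * b + a * c) * lam n ^ b) • (uGen ^ (b + c) * vGen ^ (a + d)) +
      ((-1 : ℂ) ^ (a * b + c * d + a * d) * lam n ^ (b + d)) •
        (uGen ^ (b + d) * vGen ^ (a + c)) := by
  simp only [orbitSum, add_mul, mul_add, smul_mul_assoc, mul_smul_comm, mon_mul, smul_smul]
  simp only [pow_add]
  module

theorem sgn_congr {x y : ℕ} (h : Even x ↔ Even y) : (-1 : ℂ) ^ x = (-1 : ℂ) ^ y := by
  by_cases hx : Even x
  · rw [hx.neg_one_pow, (h.1 hx).neg_one_pow]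
  · have hy : ¬ Even y := fun hy => hx (h.2 hy)
    rw [(Nat.not_even_iff_odd.1 hx).neg_one_pow, (Nat.not_even_iff_odd.1 hy).neg_one_pow]

theorem lam_pow (n : ℕ) (hn : n ≠ 0) : lam n ^ n = 1 :=
  (Complex.isPrimitiveRoot_exp n hn).pow_eq_one

set_option maxHeartbeats 2000000

/-- For `n` odd, the products of an orbit sum of degree `2n` with one of degree
`n`, in both orders (Lemma 2.3 of the paper).  The sign `(-1)^(i(j-1))` of the
paper is written `(-1)^(i(j+1))`, which is equal to it; the conditions
`i - j < n/2` and `i - j > n/2` are stated in `ℤ` as `2(i-j) < n`, `2(i-j) > n`. -/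
theorem orbitSum_two_n_mul_n (n : ℕ) (hodd : Odd n) (i j : ℕ)
    (hi : i ≤ n) (hj : j ≤ (n - 1) / 2) :
    (2 * ((i : ℤ) - (j : ℤ)) < (n : ℤ) →
      orbitSum n (2 * n - i) i * orbitSum n (n - j) j =
        ((-1 : ℂ) ^ (i * (j + 1))) • orbitSum n (3 * n - i - j) (i + j) +
          ((-1 : ℂ) ^ (i * j) * lam n ^ j) • orbitSum n (2 * n - i + j) (n + i - j)) ∧
    (2 * ((i : ℤ) - (j : ℤ)) > (n : ℤ) →
      orbitSum n (2 * n - i) i * orbitSum n (n - j) j =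
        ((-1 : ℂ) ^ (i * (j + 1))) • orbitSum n (3 * n - i - j) (i + j) +
          ((-1 : ℂ) ^ (i * j) * lam n ^ i) • orbitSum n (n + i - j) (2 * n + j - i)) ∧
    (2 * ((i : ℤ) - (j : ℤ)) < (n : ℤ) →
      orbitSum n (n - j) j * orbitSum n (2 * n - i) i =
        ((-1 : ℂ) ^ (i * j)) • orbitSum n (3 * n - i - j) (i + j) +
          ((-1 : ℂ) ^ (i * (j + 1)) * lam n ^ j) • orbitSum n (2 * n - i + j) (n + i - j)) ∧
    (2 * ((i : ℤ) - (j : ℤ)) > (n : ℤ) →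
      orbitSum n (n - j) j * orbitSum n (2 * n - i) i =
        ((-1 : ℂ) ^ (i * j)) • orbitSum n (3 * n - i - j) (i + j) +
          ((-1 : ℂ) ^ (i * (j + 1)) * lam n ^ i) • orbitSum n (n + i - j) (2 * n + j - i)) := by
  obtain ⟨p, hp⟩ : ∃ p, p = 2 * n - i := ⟨_, rfl⟩
  obtain ⟨c, hc⟩ : ∃ c, c = n - j := ⟨_, rfl⟩
  have hn : n ≠ 0 := by rintro rfl; simp at hodd
  have hpi : p + i = 2 * n := by omega
  have hcj : c + j = n := by omega
  have e1 : 3 * n - i - j = p + c := by omega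
  have e2 : n + i - j = i + c := by omega
  have e3 : 2 * n + j - i = p + j := by omega
  have hl := lam_pow n hn
  have l1 : lam n ^ j * lam n ^ (i + c) = lam n ^ i := by
    rw [← pow_add, show j + (i + c) = i + n by omega, pow_add, hl, mul_one]
  have l2 : lam n ^ i * lam n ^ (p + j) = lam n ^ j := by
    rw [← pow_add, show i + (p + j) = j + n + n by omega, pow_add, pow_add, hl, mul_one, mul_one]
  have P : Even p ↔ Even i := by
    have : Even (p + i) := by rw [hpi]; exact even_two_mul n
    exact Nat.even_add.1 this
  have C : Even c ↔ ¬ Even j := by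
    have : ¬ Even (c + j) := by rw [hcj]; exact Nat.not_even_iff_odd.2 hodd
    rw [Nat.even_add] at this
    tauto
  have s1 : (-1 : ℂ) ^ ((p + c) * (i + j)) = 1 := by
    apply Even.neg_one_pow
    simp only [Nat.even_mul, Nat.even_add, P, C]; tauto
  have s2 : (-1 : ℂ) ^ ((p + j) * (i + c)) = 1 := by
    apply Even.neg_one_pow
    simp only [Nat.even_mul, Nat.even_add, P, C]; tauto
  have s3 : (-1 : ℂ) ^ ((i + c) * (p + j)) = 1 := by rw [mul_comm, s2]
  rw [e1, e2, e3, ← hp, ← hc, orbit_mul, orbit_mul]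
  have t1 : (-1 : ℂ) ^ (i * c) = (-1) ^ (i * (j + 1)) := sgn_congr (by
    simp only [Nat.even_mul, Nat.even_add, P, C, Nat.not_even_one]; tauto)
  have t2 : (-1 : ℂ) ^ (c * j + i * j) = (-1) ^ (i * j) := sgn_congr (by
    simp only [Nat.even_mul, Nat.even_add, P, C]; tauto)
  have t3 : (-1 : ℂ) ^ (p * i + p * c) = (-1) ^ (i * j) := sgn_congr (by
    simp only [Nat.even_mul, Nat.even_add, P, C]; tauto)
  have t4 : (-1 : ℂ) ^ (p * i + c * j + p * j) = (-1) ^ (i * (j + 1)) := sgn_congr (by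
    simp only [Nat.even_mul, Nat.even_add, P, C, Nat.not_even_one]; tauto)
  have r1 : (-1 : ℂ) ^ (j * p) = (-1) ^ (i * j) := sgn_congr (by
    simp only [Nat.even_mul, P]; tauto)
  have r2 : (-1 : ℂ) ^ (p * i + j * i) = (-1) ^ (i * (j + 1)) := sgn_congr (by
    simp only [Nat.even_mul, Nat.even_add, P, Nat.not_even_one]; tauto)
  have r3 : (-1 : ℂ) ^ (c * j + c * p) = (-1) ^ (i * (j + 1)) := sgn_congr (by
    simp only [Nat.even_mul, Nat.even_add, P, C, Nat.not_even_one]; tauto)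
  have r4 : (-1 : ℂ) ^ (c * j + p * i + c * i) = (-1) ^ (i * j) := sgn_congr (by
    simp only [Nat.even_mul, Nat.even_add, P, C]; tauto)
  rw [t1, t2, t3, t4, r1, r2, r3, r4, add_comm c p, add_comm j i, add_comm c i, add_comm j p]
  simp only [orbitSum, s1, s2, s3, smul_add, smul_smul, one_mul, mul_assoc, l1, l2]
  refine ⟨fun _ => ?_, fun _ => ?_, fun _ => ?_, fun _ => ?_⟩ <;> abel
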